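/- Let m ≥ 10 and a ∈ [ √(2 log 2)/m, 1 ]. Let ν(x) = (2π)^{−1/2} e^{−x²/2}, and π(x) = (1 − e^{−a²m²/2}) g_m(x) + e^{−a²m²/2} u_m(x), where g_m(x) = (2π)^{−1/2} e^{−(x−m)²/2} and u_m(x) = e^{−d(x,[−m,2m])²/2} / (3m + √(2π)). Then for every λ ∈ [0,1] such that 1 ≤ a + 2λ − 2/m, ∫_{m(1−a)/2}^{∞} ν(x)^{1−λ} π(x)^λ dx ≥ (1/2) e^{ −λ(1−λ) m²/2 }. -/

import Mathlib

open MeasureTheory Real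

/-- The standard Gaussian density on ℝ. -/
noncomputable def stdGauss (x : ℝ) : ℝ := Real.exp (-x ^ 2 / 2) / Real.sqrt (2 * Real.pi)

/-- The density of N(m, 1). -/
noncomputable def gaussAt (m x : ℝ) : ℝ := Real.exp (-(x - m) ^ 2 / 2) / Real.sqrt (2 * Real.pi)

/-- The smoothed uniform density on [−m, 2m]. -/
noncomputable def smUnif (m x : ℝ) : ℝ :=
  Real.exp (-(Metric.infDist x (Set.Icc (-m) (2 * m))) ^ 2 / 2) / (3 * m + Real.sqrt (2 * Real.pi))

/-- The general unimodal target π = (1 − e^{−a²m²/2}) N(m,1) + e^{−a²m²/2} u_m. -/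
noncomputable def piDensA (m a x : ℝ) : ℝ :=
  (1 - Real.exp (-(a ^ 2 * m ^ 2) / 2)) * gaussAt m x
    + Real.exp (-(a ^ 2 * m ^ 2) / 2) * smUnif m x

/-!
Put `c = m(1 - a)/2` and `w = e^{-a²m²/2} ≤ 1/2`. Completing the square,
`h = ν^{1-λ} g_m^λ` is `e^{-λ(1-λ)m²/2}` times the density of `N(λm, 1)`, so it suffices to show
that on `[c, ∞)` the integrand dominates the average `(h(y) + h(2c - y))/2` of `h` and its
reflection in `c`, as this average has integral `(1/2)∫ h` there.

By concavity of `t ↦ t^λ` the integrand is at least `(1 - w) h + w ν^{1-λ} u_m^λ`.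
Since `c ≤ λm`, reflection decreases `h`; and `u_m` is so much larger than `g_m` to the left of
`m` that even `ν^{1-λ} u_m^λ` dominates the reflected `h`. With `w ≤ 1/2` these two facts give
the claim. The distance in `u_m` is never computed: it is bounded by the distance to the single
point `m - 2` of `[-m, 2m]`.
-/

section GeometricTempering

variable {α : Type*}

/-- The unnormalized geometric tempering density `ν^{1-λ} ρ^λ` between `ν` and `ρ`. -/
noncomputable def geomTempering (ν ρ : α → ℝ) (lam : ℝ) (x : α) : ℝ :=
  ν x ^ (1 - lam) * ρ x ^ lam

variable {ν ρ σ : α → ℝ} {lam : ℝ}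

lemma geomTempering_le_geomTempering {x : α} (hν : 0 ≤ ν x) (hρ : 0 ≤ ρ x) (hlam : 0 ≤ lam)
    (h : ρ x ≤ σ x) : geomTempering ν ρ lam x ≤ geomTempering ν σ lam x :=
  mul_le_mul_of_nonneg_left (rpow_le_rpow hρ h hlam) (rpow_nonneg hν _)

lemma geomTempering_const_mul {x : α} {k : ℝ} (hk : 0 ≤ k) (hρ : 0 ≤ ρ x) :
    geomTempering ν (fun x ↦ k * ρ x) lam x = k ^ lam * geomTempering ν ρ lam x := by
  rw [geomTempering, geomTempering, mul_rpow hk hρ, mul_left_comm]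

lemma mixture_geomTempering_le {x : α} {w : ℝ} (hν : 0 ≤ ν x) (hρ : 0 ≤ ρ x) (hσ : 0 ≤ σ x)
    (hlam : lam ∈ Set.Icc (0 : ℝ) 1) (hw : w ∈ Set.Icc (0 : ℝ) 1) :
    (1 - w) * geomTempering ν ρ lam x + w * geomTempering ν σ lam x
      ≤ geomTempering ν (fun x ↦ (1 - w) * ρ x + w * σ x) lam x := by
  have concave : (1 - w) * ρ x ^ lam + w * σ x ^ lam ≤ ((1 - w) * ρ x + w * σ x) ^ lam :=
    (concaveOn_rpow hlam.1 hlam.2).2 hρ hσ (sub_nonneg.2 hw.2) hw.1 (sub_add_cancel 1 w)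
  calc
    _ = ν x ^ (1 - lam) * ((1 - w) * ρ x ^ lam + w * σ x ^ lam) := by
      simp only [geomTempering]; ring
    _ ≤ _ := mul_le_mul_of_nonneg_left concave (rpow_nonneg hν _)

lemma integrable_geomTempering [MeasurableSpace α] {μ : Measure α} (hν : Integrable ν μ)
    (hρ : Integrable ρ μ) (hν0 : ∀ x, 0 ≤ ν x) (hρ0 : ∀ x, 0 ≤ ρ x)
    (hlam : lam ∈ Set.Icc (0 : ℝ) 1) : Integrable (geomTempering ν ρ lam) μ := by
  refine ((hν.const_mul (1 - lam)).add (hρ.const_mul lam)).mono'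
    ((hν.aemeasurable.pow_const _).mul (hρ.aemeasurable.pow_const _)).aestronglyMeasurable
    (.of_forall fun x ↦ ?_)
  rw [geomTempering, norm_of_nonneg (mul_nonneg (rpow_nonneg (hν0 x) _) (rpow_nonneg (hρ0 x) _))]
  exact geom_mean_le_arith_mean2_weighted (sub_nonneg.2 hlam.2) hlam.1 (hν0 x) (hρ0 x)
    (sub_add_cancel 1 lam)

end GeometricTempering

lemma setIntegral_Ici_reflect (h : ℝ → ℝ) (c : ℝ) :
    ∫ y in Set.Ici c, h (2 * c - y) = ∫ y in Set.Iic c, h y := by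
  have key := (Measure.measurePreserving_sub_left volume (2 * c)).setIntegral_preimage_emb
    (MeasurableEquiv.subLeft (2 * c)).measurableEmbedding h (Set.Iic c)
  rwa [Set.preimage_const_sub_Iic, show 2 * c - c = c by ring] at key

lemma half_integral_le_setIntegral_Ici_of_reflect {f h : ℝ → ℝ} {c : ℝ}
    (hf : IntegrableOn f (Set.Ici c)) (hh : Integrable h)
    (hfh : ∀ y ≥ c, (h y + h (2 * c - y)) / 2 ≤ f y) :
    1 / 2 * ∫ y, h y ≤ ∫ y in Set.Ici c, f y := by
  have hr : Integrable fun y ↦ h (2 * c - y) := hh.comp_sub_left _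
  calc
    1 / 2 * ∫ y, h y
        = ((∫ y in Set.Ici c, h y) + ∫ y in Set.Ici c, h (2 * c - y)) / 2 := by
      rw [setIntegral_Ici_reflect, integral_Iic_eq_integral_Iio, add_comm,
        intervalIntegral.integral_Iio_add_Ici hh.integrableOn hh.integrableOn]
      ring
    _ = ∫ y in Set.Ici c, (h y + h (2 * c - y)) / 2 := by
      rw [integral_div, integral_add hh.integrableOn hr.integrableOn]
    _ ≤ ∫ y in Set.Ici c, f y :=
      setIntegral_mono_on ((hh.add hr).div_const 2).integrableOn hf measurableSet_Ici hfh

lemma integrable_exp_neg_mul_infDist_sq {s : Set ℝ} (hs : Bornology.IsBounded s)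
    (hne : s.Nonempty) {b : ℝ} (hb : 0 < b) :
    Integrable fun x : ℝ ↦ exp (-b * Metric.infDist x s ^ 2) := by
  obtain ⟨R, hR⟩ := hs.subset_closedBall 0
  have abs_le (x : ℝ) : |x| ≤ Metric.infDist x s + R := by
    suffices |x| - R ≤ Metric.infDist x s by linarith
    refine (Metric.le_infDist hne).2 fun y hy ↦ ?_
    have hy : |y| ≤ R := by simpa using hR hy
    linarith [abs_sub_abs_le_abs_sub x y, Real.dist_eq x y]
  have hg : Integrable fun x : ℝ ↦ exp (b * R ^ 2) * exp (-(b / 2) * x ^ 2) :=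
    (integrable_exp_neg_mul_sq (half_pos hb)).const_mul _
  refine hg.mono' (by fun_prop) (.of_forall fun x ↦ ?_)
  rw [norm_of_nonneg (exp_pos _).le, ← exp_add, exp_le_exp]
  have sq_le : x ^ 2 ≤ 2 * (Metric.infDist x s ^ 2 + R ^ 2) :=
    (sq_le_sq' (neg_le_of_abs_le (abs_le x)) (le_of_abs_le (abs_le x))).trans add_sq_le
  linarith [mul_le_mul_of_nonneg_left sq_le hb.le]

section Gaussian

variable (m x : ℝ)

lemma gaussAt_eq_gaussianPDFReal : gaussAt m = ProbabilityTheory.gaussianPDFReal m 1 := by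
  ext x
  simp [gaussAt, ProbabilityTheory.gaussianPDFReal, div_eq_inv_mul]

lemma stdGauss_eq_gaussAt_zero : stdGauss = gaussAt 0 := by
  ext x
  rw [stdGauss, gaussAt, sub_zero]

lemma gaussAt_pos : 0 < gaussAt m x := by
  unfold gaussAt; positivity

lemma stdGauss_pos : 0 < stdGauss x := by
  unfold stdGauss; positivity

lemma integrable_gaussAt : Integrable (gaussAt m) :=
  gaussAt_eq_gaussianPDFReal m ▸ ProbabilityTheory.integrable_gaussianPDFReal m 1

lemma integral_gaussAt : ∫ x, gaussAt m x = 1 := by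
  rw [gaussAt_eq_gaussianPDFReal, ProbabilityTheory.integral_gaussianPDFReal_eq_one m one_ne_zero]

lemma integrable_stdGauss : Integrable stdGauss :=
  stdGauss_eq_gaussAt_zero ▸ integrable_gaussAt 0

lemma geomTempering_stdGauss_gaussAt (lam : ℝ) :
    geomTempering stdGauss (gaussAt m) lam x
      = exp (-(lam * (1 - lam) * m ^ 2) / 2) * gaussAt (lam * m) x := by
  have hZ : 0 < √(2 * π) := by positivity
  rw [geomTempering, stdGauss, gaussAt, gaussAt, div_rpow (exp_pos _).le hZ.le,
    div_rpow (exp_pos _).le hZ.le, ← exp_mul, ← exp_mul, div_mul_div_comm, ← rpow_add hZ,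
    sub_add_cancel, rpow_one, ← exp_add, ← mul_div_assoc, ← exp_add]
  ring_nf

lemma integral_geomTempering_stdGauss_gaussAt (lam : ℝ) :
    ∫ x, geomTempering stdGauss (gaussAt m) lam x = exp (-(lam * (1 - lam) * m ^ 2) / 2) := by
  simp_rw [geomTempering_stdGauss_gaussAt, integral_const_mul, integral_gaussAt, mul_one]

variable {m x} {z c k lam : ℝ}

lemma geomTempering_stdGauss_gaussAt_reflect_le (hlam : 0 ≤ lam) (hx : c ≤ x)
    (hc : 2 * c ≤ lam * (m + z)) (hk : 2 * k ≤ (m - z) * (m + z - 2 * c)) :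
    geomTempering stdGauss (gaussAt m) lam (2 * c - x)
      ≤ exp (-k) ^ lam * geomTempering stdGauss (gaussAt z) lam x := by
  rw [geomTempering_stdGauss_gaussAt, geomTempering_stdGauss_gaussAt, gaussAt, gaussAt, ← exp_mul,
    ← mul_div_assoc, ← mul_div_assoc, ← mul_div_assoc, ← exp_add, ← exp_add, ← exp_add]
  refine div_le_div_of_nonneg_right (exp_le_exp.2 ?_) (sqrt_nonneg _)
  -- The exponents differ by a function affine in `x - c`, whose slope and value at `0` are
  -- controlled by `hc` and `hk` respectively.
  have slope := mul_nonneg (sub_nonneg.2 hx) (sub_nonneg.2 hc)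
  have value_zero := mul_nonneg hlam (sub_nonneg.2 hk)
  linarith

end Gaussian

section SmoothedUniform

variable {m x z : ℝ}

lemma smUnif_nonneg (hm : 0 ≤ m) : 0 ≤ smUnif m x := by
  unfold smUnif; positivity

lemma integrable_smUnif (hm : 0 ≤ m) : Integrable (smUnif m) := by
  have hne : (Set.Icc (-m) (2 * m)).Nonempty := Set.nonempty_Icc.2 (by linarith)
  refine ((integrable_exp_neg_mul_infDist_sq (Metric.isBounded_Icc _ _) hne one_half_pos).div_const
    (3 * m + √(2 * π))).congr (.of_forall fun x ↦ ?_)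
  simp only [smUnif]
  ring_nf

lemma gaussAt_le_mul_smUnif (hz : z ∈ Set.Icc (-m) (2 * m)) :
    gaussAt z x ≤ (1 + 3 * m / √(2 * π)) * smUnif m x := by
  have hm : 0 ≤ m := by linarith [hz.1, hz.2]
  have infDist_sq_le : Metric.infDist x (Set.Icc (-m) (2 * m)) ^ 2 ≤ (x - z) ^ 2 := by
    rw [← sq_abs (x - z), ← Real.dist_eq]
    exact pow_le_pow_left₀ Metric.infDist_nonneg (Metric.infDist_le_dist_of_mem hz) 2
  calc
    gaussAt z x
        ≤ exp (-Metric.infDist x (Set.Icc (-m) (2 * m)) ^ 2 / 2) / √(2 * π) := by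
      unfold gaussAt; gcongr
    _ = (1 + 3 * m / √(2 * π)) * smUnif m x := by
      unfold smUnif; field_simp; ring

lemma one_add_three_mul_div_sqrt_two_pi_le_exp (hm : 3 ≤ m) :
    1 + 3 * m / √(2 * π) ≤ exp (m - 1) := by
  have hZ : 5 / 2 ≤ √(2 * π) := le_sqrt_of_sq_le (by linarith [pi_gt_d2])
  calc
    1 + 3 * m / √(2 * π) ≤ 1 + 3 * m / (5 / 2) := by gcongr
    _ ≤ 1 + (m - 1) + (m - 1) ^ 2 / 2 := by nlinarith
    _ ≤ exp (m - 1) := quadratic_le_exp_of_nonneg (by linarith)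

lemma exp_neg_mul_gaussAt_le_smUnif (hm : 3 ≤ m) (hz : z ∈ Set.Icc (-m) (2 * m)) :
    exp (-(m - 1)) * gaussAt z x ≤ smUnif m x := by
  rw [exp_neg, inv_mul_le_iff₀ (exp_pos _)]
  exact (gaussAt_le_mul_smUnif hz).trans <| mul_le_mul_of_nonneg_right
    (one_add_three_mul_div_sqrt_two_pi_le_exp hm) (smUnif_nonneg (by linarith))

end SmoothedUniform

section Mixture

variable {m c lam w : ℝ}

lemma geomTempering_gaussAt_reflect_le_geomTempering_smUnif {x : ℝ} (hm : 3 ≤ m)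
    (hlam : 0 ≤ lam) (hcl : c ≤ lam * (m - 1)) (hcm : c ≤ (m - 1) / 2) (hx : c ≤ x) :
    geomTempering stdGauss (gaussAt m) lam (2 * c - x)
      ≤ geomTempering stdGauss (smUnif m) lam x := by
  have hz : m - 2 ∈ Set.Icc (-m) (2 * m) := ⟨by linarith, by linarith⟩
  have hgauss := (gaussAt_pos (m - 2) x).le
  calc
    _ ≤ exp (-(m - 1)) ^ lam * geomTempering stdGauss (gaussAt (m - 2)) lam x :=
      geomTempering_stdGauss_gaussAt_reflect_le hlam hx (by linarith) (by linarith)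
    _ = geomTempering stdGauss (fun x ↦ exp (-(m - 1)) * gaussAt (m - 2) x) lam x :=
      (geomTempering_const_mul (exp_pos _).le hgauss).symm
    _ ≤ geomTempering stdGauss (smUnif m) lam x :=
      geomTempering_le_geomTempering (stdGauss_pos x).le (by positivity) hlam
        (exp_neg_mul_gaussAt_le_smUnif hm hz)

lemma average_reflect_le_geomTempering_mixture {x : ℝ} (hm : 3 ≤ m)
    (hlam : lam ∈ Set.Icc (0 : ℝ) 1) (hw : w ∈ Set.Icc (0 : ℝ) (1 / 2))
    (hcl : c ≤ lam * (m - 1)) (hcm : c ≤ (m - 1) / 2) (hx : c ≤ x) :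
    (geomTempering stdGauss (gaussAt m) lam x
        + geomTempering stdGauss (gaussAt m) lam (2 * c - x)) / 2
      ≤ geomTempering stdGauss (fun x ↦ (1 - w) * gaussAt m x + w * smUnif m x) lam x := by
  set h := geomTempering stdGauss (gaussAt m) lam
  have reflect_le : h (2 * c - x) ≤ h x := by
    simpa using geomTempering_stdGauss_gaussAt_reflect_le (z := m) (k := 0) hlam.1 hx
      (by linarith [hlam.1]) (by simp)
  have reflect_le_smUnif : h (2 * c - x) ≤ geomTempering stdGauss (smUnif m) lam x :=
    geomTempering_gaussAt_reflect_le_geomTempering_smUnif hm hlam.1 hcl hcm hx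
  calc
    (h x + h (2 * c - x)) / 2 ≤ (1 - w) * h x + w * h (2 * c - x) := by
      linarith [mul_nonneg (sub_nonneg.2 hw.2) (sub_nonneg.2 reflect_le)]
    _ ≤ (1 - w) * h x + w * geomTempering stdGauss (smUnif m) lam x := by
      gcongr; exact hw.1
    _ ≤ _ := mixture_geomTempering_le (stdGauss_pos x).le (gaussAt_pos m x).le
      (smUnif_nonneg (by linarith)) hlam ⟨hw.1, by linarith [hw.2]⟩

lemma half_exp_le_setIntegral_geomTempering_mixture (hm : 3 ≤ m)
    (hlam : lam ∈ Set.Icc (0 : ℝ) 1) (hw : w ∈ Set.Icc (0 : ℝ) (1 / 2))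
    (hcl : c ≤ lam * (m - 1)) (hcm : c ≤ (m - 1) / 2) :
    1 / 2 * exp (-(lam * (1 - lam) * m ^ 2) / 2)
      ≤ ∫ x in Set.Ici c,
          geomTempering stdGauss (fun x ↦ (1 - w) * gaussAt m x + w * smUnif m x) lam x := by
  have hm0 : 0 ≤ m := by linarith
  have hg0 (x : ℝ) := (gaussAt_pos m x).le
  have hν0 (x : ℝ) := (stdGauss_pos x).le
  have hmix0 (x : ℝ) : 0 ≤ (1 - w) * gaussAt m x + w * smUnif m x :=
    add_nonneg (mul_nonneg (by linarith [hw.2]) (hg0 x)) (mul_nonneg hw.1 (smUnif_nonneg hm0))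
  have hmix : Integrable fun x ↦ (1 - w) * gaussAt m x + w * smUnif m x :=
    ((integrable_gaussAt m).const_mul _).add ((integrable_smUnif hm0).const_mul _)
  rw [← integral_geomTempering_stdGauss_gaussAt]
  exact half_integral_le_setIntegral_Ici_of_reflect
    (integrable_geomTempering integrable_stdGauss hmix hν0 hmix0 hlam).integrableOn
    (integrable_geomTempering integrable_stdGauss (integrable_gaussAt m) hν0 hg0 hlam)
    fun _ hx ↦ average_reflect_le_geomTempering_mixture hm hlam hw hcl hcm hx

end Mixture

lemma one_le_sqrt_two_mul_log_two : 1 ≤ √(2 * log 2) :=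
  one_le_sqrt.2 (by linarith [log_two_gt_d9])

lemma exp_neg_sq_div_two_le_half {t : ℝ} (ht : √(2 * log 2) ≤ t) : exp (-t ^ 2 / 2) ≤ 1 / 2 := by
  have hsq : 2 * log 2 ≤ t ^ 2 := (sqrt_le_left ((sqrt_nonneg _).trans ht)).1 ht
  rw [← le_log_iff_exp_le one_half_pos, one_div, log_inv]
  linarith

theorem unimodal_tempering_right_unnormalized_mass_lower_bound_general
    {m a lam : ℝ} (hm : 3 ≤ m) (ha : √(2 * log 2) / m ≤ a) (hlam : lam ∈ Set.Icc (0 : ℝ) 1)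
    (hcond : 1 ≤ a + 2 * lam - 2 / m) :
    1 / 2 * exp (-(lam * (1 - lam) * m ^ 2) / 2)
      ≤ ∫ x in Set.Ici (m * (1 - a) / 2), stdGauss x ^ (1 - lam) * piDensA m a x ^ lam := by
  have hm0 : 0 < m := by linarith
  have ham : √(2 * log 2) ≤ a * m := (div_le_iff₀ hm0).1 ha
  have hw : exp (-(a ^ 2 * m ^ 2) / 2) ≤ 1 / 2 := mul_pow a m 2 ▸ exp_neg_sq_div_two_le_half ham
  have hcl : m * (1 - a) / 2 ≤ lam * (m - 1) := by
    have hcond' : m * 1 ≤ m * (a + 2 * lam - 2 / m) := by gcongr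
    rw [mul_sub, mul_div_cancel₀ _ hm0.ne'] at hcond'
    linarith [hlam.2]
  have hcm : m * (1 - a) / 2 ≤ (m - 1) / 2 := by linarith [one_le_sqrt_two_mul_log_two]
  exact half_exp_le_setIntegral_geomTempering_mixture hm hlam ⟨(exp_pos _).le, hw⟩ hcl hcm

/-- For m ≥ 10, a ∈ [√(2 log 2)/m, 1] and λ ∈ [0,1] with
1 ≤ a + 2λ − 2/m, we have ∫_{m(1−a)/2}^{∞} ν^{1−λ}π^λ ≥ (1/2)e^{−λ(1−λ)m²/2}. -/
theorem unimodal_tempering_right_unnormalized_mass_lower_bound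
    (m a : ℝ) (hm : 10 ≤ m)
    (ha : a ∈ Set.Icc (Real.sqrt (2 * Real.log 2) / m) 1)
    (lam : ℝ) (hlam : lam ∈ Set.Icc (0 : ℝ) 1)
    (hcond : 1 ≤ a + 2 * lam - 2 / m) :
    (1 / 2) * Real.exp (-(lam * (1 - lam) * m ^ 2) / 2)
      ≤ ∫ x in Set.Ici (m * (1 - a) / 2),
          (stdGauss x) ^ (1 - lam) * (piDensA m a x) ^ lam :=
  unimodal_tempering_right_unnormalized_mass_lower_bound_general (by linarith) ha.1 hlam hcond
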